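/- Let P be an n×n row-stochastic matrix that inversely corresponds to Γ, i.e., I − P = α Lᵀ for some nonzero real α. Then the Cesàro limit C = lim_{N→∞} (1/N) Σ_{t=1}^{N} P^t exists and satisfies Cᵀ = J̃, i.e., C_{ji} = J̃_{ij} for all vertices i, j (the matrix of Cesàro limiting probabilities of the Markov chain coincides with the normalized matrix of maximum out-forests of Γ). -/

import Mathlib

/-! The theorem rests on the recursion `Q_{k+1} + Q_k L = σ_{k+1} I` (`Qmat_succ`). To prove its
`(i, j)` entry, sums over forests are split according to the parent of `j` (`sum_split`): a
forest is either a forest `G` with root `j`, or such a `G` with an arc `(p, j)` attached, where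
`p` lies outside the tree of `j` in `G`. For `i ≠ j`, attaching the arc moves the whole tree of
`j` into the tree of `p` (`ind_insert`), and the identity then holds for each `G` separately.

Let `m = n - d'` be the number of arcs of a maximum out-forest. As `Q_{m+1} = 0` and
`σ_{m+1} = 0`, the recursion at `k = m` gives `J̃ L = 0`, that is `P J̃ᵀ = J̃ᵀ`. The recursion at
`k = m - 1` (or `Q_0 = σ_0 I` if `m = 0`) gives `J̃ = I - R L` for some `R`, that is
`I = J̃ᵀ + (I - P) S` for some `S`.
Multiplying by `P ^ t`, summing and telescoping yields
`∑_{t=1}^N P ^ t = N J̃ᵀ + (P - P ^ (N+1)) S`, and the last term is bounded because `P` is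
stochastic. -/

open Matrix Finset

namespace ForestMatrix

variable {n : ℕ}

/-- Reachability from `i` to `j` within a finite set `F` of arcs. -/
def FReach (F : Finset (Fin n × Fin n)) (i j : Fin n) : Prop :=
  Relation.ReflTransGen (fun a b => (a, b) ∈ F) i j

/-- `F` is (the arc set of) a spanning diverging forest (out-forest) of the digraph whose
positive arc weights are recorded in `W`: all arcs of `F` are arcs of the digraph, every
vertex has indegree at most one, and there are no directed cycles. -/
def IsOutForest (W : Matrix (Fin n) (Fin n) ℝ) (F : Finset (Fin n × Fin n)) : Prop :=
  (∀ e ∈ F, 0 < W e.1 e.2) ∧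
  (∀ v : Fin n, ({e ∈ F | e.2 = v} : Finset (Fin n × Fin n)).card ≤ 1) ∧
  (∀ v : Fin n, ¬ Relation.TransGen (fun a b => (a, b) ∈ F) v v)

/-- The weight of a (sub)digraph: the product of its arc weights. -/
noncomputable def wt (W : Matrix (Fin n) (Fin n) ℝ) (F : Finset (Fin n × Fin n)) : ℝ :=
  ∏ e ∈ F, W e.1 e.2

/-- The weight of a set of digraphs: the sum of their weights. -/
noncomputable def wtSet (W : Matrix (Fin n) (Fin n) ℝ)
    (G : Finset (Finset (Fin n × Fin n))) : ℝ :=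
  ∑ F ∈ G, wt W F

open scoped Classical in
/-- The set of all out-forests of the digraph with weight matrix `W`. -/
noncomputable def allOutForests (W : Matrix (Fin n) (Fin n) ℝ) :
    Finset (Finset (Fin n × Fin n)) :=
  Finset.univ.filter (fun F => IsOutForest W F)

open scoped Classical in
/-- The set of all out-forests with `k` arcs. -/
noncomputable def outForests (W : Matrix (Fin n) (Fin n) ℝ) (k : ℕ) :
    Finset (Finset (Fin n × Fin n)) :=
  Finset.univ.filter (fun F => IsOutForest W F ∧ F.card = k)

/-- The number of arcs of a maximum out-forest; it equals `n - d'` where `d'` is the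
out-forest dimension. -/
noncomputable def maxArcs (W : Matrix (Fin n) (Fin n) ℝ) : ℕ :=
  (allOutForests W).sup Finset.card

/-- `σ_k`: the total weight of the out-forests with `k` arcs. -/
noncomputable def sigma (W : Matrix (Fin n) (Fin n) ℝ) (k : ℕ) : ℝ :=
  wtSet W (outForests W k)

/-- `j` belongs to the tree of the forest `F` diverging from `i`:
`i` is a root of `F` and `j` is reachable from `i` in `F`. -/
def inTreeOf (F : Finset (Fin n × Fin n)) (i j : Fin n) : Prop :=
  (∀ e ∈ F, e.2 ≠ i) ∧ FReach F i j

open scoped Classical in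
/-- `Q_k`: the matrix of out-forests with `k` arcs; its `(i,j)` entry is the total weight of
the out-forests with `k` arcs in which `j` belongs to a tree diverging from `i`. -/
noncomputable def Qmat (W : Matrix (Fin n) (Fin n) ℝ) (k : ℕ) :
    Matrix (Fin n) (Fin n) ℝ :=
  fun i j => wtSet W ((outForests W k).filter (fun F => inTreeOf F i j))

/-- The column Laplacian matrix of the digraph with weight matrix `W`. -/
noncomputable def Lap (W : Matrix (Fin n) (Fin n) ℝ) : Matrix (Fin n) (Fin n) ℝ :=
  fun i j => if i = j then ∑ k ∈ Finset.univ.erase i, W k i else -W i j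

/-- `σ(τ) = Σ_{k=0}^{n-d'} σ_k τ^k`. -/
noncomputable def sigmaTau (W : Matrix (Fin n) (Fin n) ℝ) (τ : ℝ) : ℝ :=
  ∑ k ∈ Finset.range (maxArcs W + 1), sigma W k * τ ^ k

/-- `Q(τ) = Σ_{k=0}^{n-d'} Q_k τ^k`. -/
noncomputable def QTau (W : Matrix (Fin n) (Fin n) ℝ) (τ : ℝ) :
    Matrix (Fin n) (Fin n) ℝ :=
  ∑ k ∈ Finset.range (maxArcs W + 1), τ ^ k • Qmat W k

/-- `J(τ) = σ(τ)⁻¹ Q(τ)`. -/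
noncomputable def JTau (W : Matrix (Fin n) (Fin n) ℝ) (τ : ℝ) :
    Matrix (Fin n) (Fin n) ℝ :=
  (sigmaTau W τ)⁻¹ • QTau W τ

/-- `J̃ = σ_{n-d'}⁻¹ Q_{n-d'}`: the normalized matrix of maximum out-forests. -/
noncomputable def Jtil (W : Matrix (Fin n) (Fin n) ℝ) : Matrix (Fin n) (Fin n) ℝ :=
  (sigma W (maxArcs W))⁻¹ • Qmat W (maxArcs W)

/-- Reachability in the digraph with weight matrix `W`. -/
def Reach (W : Matrix (Fin n) (Fin n) ℝ) (i j : Fin n) : Prop :=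
  Relation.ReflTransGen (fun a b => 0 < W a b) i j

/-- `K` is a source knot of the digraph: `K` is the vertex set of a bicomponent
(a maximal strongly connected subgraph) and no arc enters `K` from outside. -/
def IsSourceKnot (W : Matrix (Fin n) (Fin n) ℝ) (K : Finset (Fin n)) : Prop :=
  (∃ i, ∀ j, j ∈ K ↔ (Reach W i j ∧ Reach W j i)) ∧
  (∀ j k, k ∈ K → 0 < W j k → j ∈ K)

/-! ### Attaching an arc to a forest -/

lemma IsOutForest.unique_parent {W : Matrix (Fin n) (Fin n) ℝ} {F : Finset (Fin n × Fin n)}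
    (hF : IsOutForest W F) {a b v : Fin n} (ha : (a, v) ∈ F) (hb : (b, v) ∈ F) : a = b := by
  have h := Finset.card_le_one.1 (hF.2.1 v) (a, v) (by simp [ha]) (b, v) (by simp [hb])
  exact congrArg Prod.fst h

lemma isOutForest_of {W : Matrix (Fin n) (Fin n) ℝ} {F : Finset (Fin n × Fin n)}
    (h1 : ∀ e ∈ F, 0 < W e.1 e.2)
    (h2 : ∀ a b v : Fin n, (a, v) ∈ F → (b, v) ∈ F → a = b)
    (h3 : ∀ v : Fin n, ¬ Relation.TransGen (fun a b => (a, b) ∈ F) v v) : IsOutForest W F := by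
  refine ⟨h1, fun v => Finset.card_le_one.2 ?_, h3⟩
  rintro ⟨a, v1⟩ ha ⟨b, v2⟩ hb
  simp only [Finset.mem_filter] at ha hb
  obtain ⟨ha, rfl⟩ := ha
  obtain ⟨hb, rfl⟩ := hb
  rw [h2 _ _ _ ha hb]

lemma IsOutForest.subset {W : Matrix (Fin n) (Fin n) ℝ} {F G : Finset (Fin n × Fin n)}
    (hF : IsOutForest W F) (hG : G ⊆ F) : IsOutForest W G :=
  isOutForest_of (fun e he => hF.1 e (hG he))
    (fun _ _ _ ha hb => hF.unique_parent (hG ha) (hG hb))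
    (fun v hv => hF.2.2 v (Relation.TransGen.mono (fun _ _ h => hG h) _ _ hv))

lemma FReach.eq_of_root {F : Finset (Fin n × Fin n)} {a i : Fin n}
    (hi : ∀ e ∈ F, e.2 ≠ i) (h : FReach F a i) : a = i := by
  rcases Relation.ReflTransGen.cases_tail h with h | ⟨c, _, hc⟩
  · exact h.symm
  · exact absurd rfl (hi _ hc)

/-- Distinct trees of an out-forest are disjoint: the predecessors of a vertex form a chain,
so two roots reaching it are comparable and hence equal. -/
lemma IsOutForest.root_unique {W : Matrix (Fin n) (Fin n) ℝ} {F : Finset (Fin n × Fin n)}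
    (hF : IsOutForest W F) {i j l : Fin n} (hi : inTreeOf F i l) (hj : inTreeOf F j l) :
    i = j := by
  have hu : Relator.RightUnique (Function.swap fun a b : Fin n => (a, b) ∈ F) :=
    fun v a b ha hb => hF.unique_parent ha hb
  rcases Relation.ReflTransGen.total_of_right_unique hu
    (Relation.reflTransGen_swap.2 hi.2) (Relation.reflTransGen_swap.2 hj.2) with h | h
  · exact (FReach.eq_of_root hi.1 (Relation.reflTransGen_swap.1 h)).symm
  · exact FReach.eq_of_root hj.1 (Relation.reflTransGen_swap.1 h)

lemma fReach_insert {G : Finset (Fin n × Fin n)} {p j a b : Fin n} :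
    FReach (insert (p, j) G) a b ↔ FReach G a b ∨ (FReach G a p ∧ FReach G j b) := by
  have hmono : ∀ {x y}, FReach G x y → FReach (insert (p, j) G) x y := fun h =>
    Relation.ReflTransGen.mono (fun _ _ h => Finset.mem_insert_of_mem h) _ _ h
  constructor
  · intro h
    induction h with
    | refl => exact Or.inl .refl
    | tail _ hs ih =>
      rcases Finset.mem_insert.1 hs with hs | hs
      · obtain ⟨rfl, rfl⟩ := Prod.mk.inj hs
        rcases ih with ih | ih
        · exact Or.inr ⟨ih, .refl⟩
        · exact Or.inr ⟨ih.1, .refl⟩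
      · rcases ih with ih | ih
        · exact Or.inl (ih.tail hs)
        · exact Or.inr ⟨ih.1, ih.2.tail hs⟩
  · rintro (h | ⟨h1, h2⟩)
    · exact hmono h
    · exact ((hmono h1).tail (Finset.mem_insert_self _ _)).trans (hmono h2)

lemma transGen_insert {G : Finset (Fin n × Fin n)} {p j a b : Fin n}
    (h : Relation.TransGen (fun a b => (a, b) ∈ insert (p, j) G) a b) :
    Relation.TransGen (fun a b => (a, b) ∈ G) a b ∨ (FReach G a p ∧ FReach G j b) := by
  induction h with
  | single hs =>
    rcases Finset.mem_insert.1 hs with hs | hs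
    · obtain ⟨rfl, rfl⟩ := Prod.mk.inj hs
      exact Or.inr ⟨.refl, .refl⟩
    · exact Or.inl (.single hs)
  | tail _ hs ih =>
    rcases Finset.mem_insert.1 hs with hs | hs
    · obtain ⟨rfl, rfl⟩ := Prod.mk.inj hs
      rcases ih with ih | ih
      · exact Or.inr ⟨ih.to_reflTransGen, .refl⟩
      · exact Or.inr ⟨ih.1, .refl⟩
    · rcases ih with ih | ih
      · exact Or.inl (ih.tail hs)
      · exact Or.inr ⟨ih.1, ih.2.tail hs⟩

lemma IsOutForest.insert {W : Matrix (Fin n) (Fin n) ℝ} {G : Finset (Fin n × Fin n)}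
    (hG : IsOutForest W G) {p j : Fin n} (hj : ∀ e ∈ G, e.2 ≠ j) (hp : ¬ FReach G j p)
    (hW : 0 < W p j) : IsOutForest W (insert (p, j) G) := by
  refine isOutForest_of ?_ ?_ ?_
  · intro e he
    rcases Finset.mem_insert.1 he with rfl | he
    · exact hW
    · exact hG.1 e he
  · intro a b v ha hb
    rcases Finset.mem_insert.1 ha with ha | ha <;> rcases Finset.mem_insert.1 hb with hb | hb
    · exact (Prod.mk.inj ha).1.trans (Prod.mk.inj hb).1.symm
    · exact absurd (Prod.mk.inj ha).2 (hj _ hb)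
    · exact absurd (Prod.mk.inj hb).2 (hj _ ha)
    · exact hG.unique_parent ha hb
  · intro v hv
    rcases transGen_insert hv with h | ⟨h1, h2⟩
    · exact hG.2.2 v h
    · exact hp (h2.trans h1)

/-! ### Splitting sums over forests by the parent of a vertex -/

open scoped Classical in
/-- The indicator of the event that `l` belongs to the tree of `F` diverging from `i`. -/
noncomputable def ind (F : Finset (Fin n × Fin n)) (i l : Fin n) : ℝ :=
  if inTreeOf F i l then 1 else 0

open scoped Classical in
/-- The out-forests with `k` arcs in which `j` is a root. -/
noncomputable def rooted (W : Matrix (Fin n) (Fin n) ℝ) (j : Fin n) (k : ℕ) :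
    Finset (Finset (Fin n × Fin n)) :=
  (outForests W k).filter (fun F => ∀ e ∈ F, e.2 ≠ j)

open scoped Classical in
/-- The out-forests with `k - 1` arcs in which `j` is a root; the index is encoded as
`card + 1 = k`, so that the set is empty for `k = 0`. -/
noncomputable def rootedPred (W : Matrix (Fin n) (Fin n) ℝ) (j : Fin n) (k : ℕ) :
    Finset (Finset (Fin n × Fin n)) :=
  (allOutForests W).filter (fun F => (∀ e ∈ F, e.2 ≠ j) ∧ F.card + 1 = k)

lemma rootedPred_succ (W : Matrix (Fin n) (Fin n) ℝ) (j : Fin n) (k : ℕ) :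
    rootedPred W j (k + 1) = rooted W j k := by
  ext F
  simp [rootedPred, rooted, allOutForests, outForests]
  tauto

lemma Qmat_apply (W : Matrix (Fin n) (Fin n) ℝ) (k : ℕ) (i j : Fin n) :
    Qmat W k i j = ∑ F ∈ outForests W k, wt W F * ind F i j := by
  simp [Qmat, wtSet, ind, Finset.sum_filter]

lemma ind_root {G : Finset (Fin n × Fin n)} {j l : Fin n} (hj : ∀ e ∈ G, e.2 ≠ j) :
    ind G j l = 1 ↔ FReach G j l := by
  have h : inTreeOf G j l ↔ FReach G j l := ⟨fun h => h.2, fun h => ⟨hj, h⟩⟩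
  simp [ind, h]

/-- A forest in which `j` is not a root arises uniquely from a forest in which `j` is a root by
attaching an arc `(p, j)` with `p` outside the tree of `j`. Vertices `p` with `W p j = 0`
contribute nothing, so the inner sum may range over all `p`. -/
lemma sum_split (W : Matrix (Fin n) (Fin n) ℝ) (hW0 : ∀ i j, 0 ≤ W i j) (j : Fin n) (k : ℕ)
    (g : Finset (Fin n × Fin n) → ℝ) :
    ∑ F ∈ outForests W k, wt W F * g F =
      ∑ G ∈ rooted W j k, wt W G * g G +
      ∑ G ∈ rootedPred W j k, wt W G *
        ∑ p, (1 - ind G j p) * W p j * g (insert (p, j) G) := by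
  classical
  rw [← Finset.sum_filter_add_sum_filter_not (outForests W k) (fun F => ∀ e ∈ F, e.2 ≠ j)]
  have e1 : (outForests W k).filter (fun F => ∀ e ∈ F, e.2 ≠ j) = rooted W j k := by
    ext F; simp [rooted]
  rw [e1]
  congr 1
  have e2 : ∀ G ∈ rootedPred W j k,
      wt W G * ∑ p, (1 - ind G j p) * W p j * g (insert (p, j) G) =
      ∑ p ∈ Finset.univ.filter (fun p => 0 < W p j ∧ ¬ FReach G j p),
        wt W (insert (p, j) G) * g (insert (p, j) G) := by
    intro G hG
    simp only [rootedPred, Finset.mem_filter] at hG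
    rw [Finset.mul_sum, Finset.sum_filter]
    refine Finset.sum_congr rfl fun p _ => ?_
    have hw : wt W (insert (p, j) G) = W p j * wt W G := by
      rw [wt, Finset.prod_insert fun h => hG.2.1 _ h rfl, wt]
    by_cases hr : FReach G j p
    · simp [hr, (ind_root hG.2.1).2 hr]
    · have h0 : ind G j p = 0 := by simp [ind, inTreeOf, hr]
      by_cases hp : 0 < W p j
      · simp only [hp, hr, h0, hw, not_false_eq_true, and_self, if_true]; ring
      · have : W p j = 0 := le_antisymm (not_lt.1 hp) (hW0 p j)
        simp [this]
  rw [Finset.sum_congr rfl e2, Finset.sum_sigma']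
  symm
  refine Finset.sum_bij (fun x _ => insert (x.2, j) x.1) ?_ ?_ ?_ ?_
  · rintro ⟨G, p⟩ h
    simp only [rootedPred, allOutForests, Finset.mem_sigma, Finset.mem_filter,
      Finset.mem_univ, true_and] at h
    obtain ⟨⟨hG, hj, hc⟩, hW, hp⟩ := h
    simp only [outForests, Finset.mem_filter, Finset.mem_univ, true_and]
    refine ⟨⟨hG.insert hj hp hW, ?_⟩, fun hh => hh _ (Finset.mem_insert_self _ _) rfl⟩
    rw [Finset.card_insert_of_notMem fun h => hj _ h rfl, hc]
  · rintro ⟨G, p⟩ h ⟨G', p'⟩ h' heq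
    simp only [rootedPred, allOutForests, Finset.mem_sigma, Finset.mem_filter,
      Finset.mem_univ, true_and] at h h' heq
    have hp : p = p' := by
      have : (p, j) ∈ insert (p', j) G' := heq ▸ Finset.mem_insert_self _ _
      rcases Finset.mem_insert.1 this with h1 | h1
      · exact (Prod.mk.inj h1).1
      · exact absurd rfl (h'.1.2.1 _ h1)
    subst hp
    have hGG : G = G' := by
      rw [← Finset.erase_insert (fun hh => h.1.2.1 _ hh rfl : (p, j) ∉ G), heq,
        Finset.erase_insert (fun hh => h'.1.2.1 _ hh rfl : (p, j) ∉ G')]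
    rw [hGG]
  · intro F hF
    simp only [outForests, Finset.mem_filter, Finset.mem_univ, true_and] at hF
    obtain ⟨⟨hF, hc⟩, hn⟩ := hF
    push Not at hn
    obtain ⟨⟨p, j'⟩, hp, rfl⟩ := hn
    simp only at hp ⊢
    refine ⟨⟨F.erase (p, j'), p⟩, ?_, Finset.insert_erase hp⟩
    simp only [rootedPred, allOutForests, Finset.mem_sigma, Finset.mem_filter,
      Finset.mem_univ, true_and]
    refine ⟨⟨hF.subset (Finset.erase_subset _ _), ?_, ?_⟩, hF.1 _ hp, ?_⟩
    · rintro ⟨a, b⟩ he rfl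
      have hab := hF.unique_parent (Finset.mem_of_mem_erase he) hp
      exact Finset.ne_of_mem_erase he (by rw [hab])
    · rw [Finset.card_erase_add_one hp, hc]
    · intro hr
      -- A path from `j'` to its parent `p` closes up to a cycle of `F`.
      exact hF.2.2 j' (Relation.TransGen.tail'
        (Relation.ReflTransGen.mono (fun _ _ h => Finset.mem_of_mem_erase h) _ _ hr) hp)
  · intros; rfl

/-! ### The recursion for the forest matrices -/

/-- Attaching `(p, j)` moves the tree of `j` into the tree containing `p`. -/
lemma ind_insert {W : Matrix (Fin n) (Fin n) ℝ} {G : Finset (Fin n × Fin n)}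
    (hG : IsOutForest W G) {i j p l : Fin n} (hj : ∀ e ∈ G, e.2 ≠ j) (hij : i ≠ j) :
    ind (insert (p, j) G) i l = ind G i l + ind G i p * ind G j l := by
  have h1 : inTreeOf (insert (p, j) G) i l ↔
      inTreeOf G i l ∨ (inTreeOf G i p ∧ inTreeOf G j l) := by
    unfold inTreeOf
    rw [fReach_insert]
    have : (∀ e ∈ insert (p, j) G, e.2 ≠ i) ↔ ∀ e ∈ G, e.2 ≠ i := by
      simp [hij.symm]
    rw [this]
    tauto
  have h2 : ¬ (inTreeOf G i l ∧ inTreeOf G j l) := fun h => hij (hG.root_unique h.1 h.2)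
  unfold ind
  by_cases a : inTreeOf G i l <;> by_cases b : inTreeOf G i p <;>
    by_cases c : inTreeOf G j l <;> simp_all

lemma ind_mul_ind {W : Matrix (Fin n) (Fin n) ℝ} {G : Finset (Fin n × Fin n)}
    (hG : IsOutForest W G) {i j l : Fin n} (hij : i ≠ j) : ind G i l * ind G j l = 0 := by
  have h2 : ¬ (inTreeOf G i l ∧ inTreeOf G j l) := fun h => hij (hG.root_unique h.1 h.2)
  unfold ind
  by_cases a : inTreeOf G i l <;> by_cases c : inTreeOf G j l <;> simp_all

lemma ind_self {G : Finset (Fin n × Fin n)} {j : Fin n} (hj : ∀ e ∈ G, e.2 ≠ j) :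
    ind G j j = 1 := (ind_root hj).2 .refl

lemma ind_insert_self {G : Finset (Fin n × Fin n)} {j p l : Fin n} :
    ind (insert (p, j) G) j l = 0 := by
  have : ¬ inTreeOf (insert (p, j) G) j l := fun h => h.1 _ (Finset.mem_insert_self _ _) rfl
  simp [ind, this]

lemma mem_rooted {W : Matrix (Fin n) (Fin n) ℝ} {j : Fin n} {k : ℕ}
    {G : Finset (Fin n × Fin n)} (h : G ∈ rooted W j k) :
    IsOutForest W G ∧ ∀ e ∈ G, e.2 ≠ j := by
  simp only [rooted, outForests, Finset.mem_filter] at h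
  exact ⟨h.1.2.1, h.2⟩

lemma mem_rootedPred {W : Matrix (Fin n) (Fin n) ℝ} {j : Fin n} {k : ℕ}
    {G : Finset (Fin n × Fin n)} (h : G ∈ rootedPred W j k) :
    IsOutForest W G ∧ ∀ e ∈ G, e.2 ≠ j := by
  simp only [rootedPred, allOutForests, Finset.mem_filter] at h
  exact ⟨h.1.2, h.2.1⟩

/-- Row `i` of `Q_k`, with the forests split by the parent of a vertex `j ≠ i`. -/
lemma Qmat_split (W : Matrix (Fin n) (Fin n) ℝ) (hW0 : ∀ i j, 0 ≤ W i j) (k : ℕ)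
    {i j : Fin n} (hij : i ≠ j) (l : Fin n) :
    Qmat W k i l = ∑ G ∈ rooted W j k, wt W G * ind G i l +
      ∑ G ∈ rootedPred W j k, wt W G *
        ((∑ p, W p j - ∑ p, ind G j p * W p j) * ind G i l
          + (∑ p, ind G i p * W p j) * ind G j l) := by
  rw [Qmat_apply, sum_split W hW0 j k]
  congr 1
  refine Finset.sum_congr rfl fun G hG => ?_
  obtain ⟨hF, hj⟩ := mem_rootedPred hG
  congr 1
  rw [← Finset.sum_sub_distrib, Finset.sum_mul, Finset.sum_mul, ← Finset.sum_add_distrib]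
  refine Finset.sum_congr rfl fun p _ => ?_
  rw [ind_insert hF hj hij]
  linear_combination (-W p j * ind G j l) * ind_mul_ind hF (l := p) hij

lemma mul_Lap_apply (W : Matrix (Fin n) (Fin n) ℝ) (hWd : ∀ i, W i i = 0)
    (M : Matrix (Fin n) (Fin n) ℝ) (i j : Fin n) :
    (M * Lap W) i j = (∑ p, W p j) * M i j - ∑ l, M i l * W l j := by
  have h : ∀ l, M i l * Lap W l j =
      (if l = j then (∑ p, W p j) * M i j else 0) - M i l * W l j := by
    intro l
    unfold Lap
    split_ifs with h
    · subst h
      rw [Finset.sum_erase (f := fun k => W k l) _ (hWd l), hWd]; ring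
    · ring
  rw [Matrix.mul_apply, Finset.sum_congr rfl fun l _ => h l, Finset.sum_sub_distrib]
  simp

/-- The recursion `Q_{k+1} + Q_k L = σ_{k+1} I`. -/
lemma Qmat_succ (W : Matrix (Fin n) (Fin n) ℝ) (hW0 : ∀ i j, 0 ≤ W i j)
    (hWd : ∀ i, W i i = 0) (k : ℕ) :
    Qmat W (k + 1) + Qmat W k * Lap W = sigma W (k + 1) • (1 : Matrix (Fin n) (Fin n) ℝ) := by
  ext i j
  rw [Matrix.add_apply, mul_Lap_apply W hWd, Matrix.smul_apply, Matrix.one_apply, smul_eq_mul]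
  by_cases hij : i = j
  · subst hij
    -- Forests where `i` is not a root contribute nothing to row `i` of `Q_k`.
    have hQ : ∀ k l, Qmat W k i l = ∑ G ∈ rooted W i k, wt W G * ind G i l := by
      intro k l
      rw [Qmat_apply, sum_split W hW0 i k]
      simp [ind_insert_self]
    have hs : sigma W (k + 1) = ∑ G ∈ rooted W i (k + 1), wt W G +
        ∑ G ∈ rooted W i k, wt W G * ∑ p, (1 - ind G i p) * W p i := by
      have := sum_split W hW0 i (k + 1) (fun _ => 1)
      simpa [rootedPred_succ, sigma, wtSet] using this
    have hd : ∀ k, Qmat W k i i = ∑ G ∈ rooted W i k, wt W G := by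
      intro k
      rw [hQ]
      exact Finset.sum_congr rfl fun G hG => by rw [ind_self (mem_rooted hG).2, mul_one]
    rw [hs, hd, hd, if_pos rfl, mul_one]
    congr 1
    simp_rw [hQ, Finset.sum_mul (rooted W i k)]
    rw [Finset.sum_comm, Finset.mul_sum, ← Finset.sum_sub_distrib]
    refine Finset.sum_congr rfl fun G _ => ?_
    simp_rw [sub_mul, one_mul, Finset.sum_sub_distrib, mul_sub, Finset.mul_sum, Finset.sum_mul]
    congr 1 <;> exact Finset.sum_congr rfl fun _ _ => by ring
  · rw [if_neg hij, mul_zero]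
    -- As `j` is a root, the tree diverging from `i` misses `j`.
    have hz : ∀ G : Finset (Fin n × Fin n), IsOutForest W G → (∀ e ∈ G, e.2 ≠ j) →
        ind G i j = 0 := by
      intro G hG hj
      have := ind_mul_ind hG (l := j) hij
      rwa [ind_self hj, mul_one] at this
    have hd : ∀ k, Qmat W k i j = ∑ G ∈ rootedPred W j k, wt W G * ∑ p, ind G i p * W p j := by
      intro k
      rw [Qmat_split W hW0 k hij]
      rw [Finset.sum_eq_zero (s := rooted W j k) fun G hG => by
        rw [hz G (mem_rooted hG).1 (mem_rooted hG).2, mul_zero], zero_add]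
      refine Finset.sum_congr rfl fun G hG => ?_
      rw [hz G (mem_rootedPred hG).1 (mem_rootedPred hG).2, ind_self (mem_rootedPred hG).2]
      ring
    have hs : ∑ l, Qmat W k i l * W l j =
        ∑ G ∈ rooted W j k, wt W G * ∑ p, ind G i p * W p j +
        ∑ G ∈ rootedPred W j k, (∑ p, W p j) * (wt W G * ∑ p, ind G i p * W p j) := by
      have hl := fun l => congrArg (· * W l j) (Qmat_split W hW0 k hij l)
      simp only [add_mul (∑ G ∈ rooted W j k, _), Finset.sum_mul (rooted W j k),
        Finset.sum_mul (rootedPred W j k)] at hl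
      rw [Finset.sum_congr rfl fun l _ => hl l, Finset.sum_add_distrib]
      congr 1
      · rw [Finset.sum_comm]
        refine Finset.sum_congr rfl fun G _ => ?_
        rw [Finset.mul_sum]
        exact Finset.sum_congr rfl fun _ _ => by ring
      · rw [Finset.sum_comm]
        refine Finset.sum_congr rfl fun G _ => ?_
        set S := ∑ p, W p j
        set a := ∑ p, ind G i p * W p j with ha
        set d := ∑ p, ind G j p * W p j with hdd
        calc _ = ∑ l, (wt W G * (S - d) * (ind G i l * W l j)
                + wt W G * a * (ind G j l * W l j)) :=
              Finset.sum_congr rfl fun _ _ => by ring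
          _ = wt W G * (S - d) * a + wt W G * a * d := by
              rw [Finset.sum_add_distrib, ← Finset.mul_sum, ← Finset.mul_sum]
          _ = _ := by ring
    rw [hs, hd, hd, rootedPred_succ, Finset.mul_sum]
    ring

/-! ### Maximum out-forests -/

lemma isOutForest_empty (W : Matrix (Fin n) (Fin n) ℝ) : IsOutForest W ∅ :=
  isOutForest_of (by simp) (by simp) fun v hv => by
    obtain ⟨c, _, hc⟩ := Relation.TransGen.tail'_iff.1 hv
    simp at hc

lemma outForests_maxArcs_succ (W : Matrix (Fin n) (Fin n) ℝ) :
    outForests W (maxArcs W + 1) = ∅ := by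
  classical
  refine Finset.eq_empty_of_forall_notMem fun F hF => ?_
  simp only [outForests, Finset.mem_filter, Finset.mem_univ, true_and] at hF
  have : F.card ≤ maxArcs W := Finset.le_sup (f := Finset.card) (by simp [allOutForests, hF.1])
  omega

lemma sigma_maxArcs_pos (W : Matrix (Fin n) (Fin n) ℝ) : 0 < sigma W (maxArcs W) := by
  classical
  have hne : (allOutForests W).Nonempty := ⟨∅, by simp [allOutForests, isOutForest_empty]⟩
  obtain ⟨F, hF, hc⟩ := Finset.exists_mem_eq_sup _ hne Finset.card
  refine Finset.sum_pos (fun G hG => Finset.prod_pos fun e he => ?_) ⟨F, ?_⟩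
  · simp only [outForests, Finset.mem_filter, Finset.mem_univ, true_and] at hG
    exact hG.1.1 e he
  · simp only [allOutForests, Finset.mem_filter, Finset.mem_univ, true_and] at hF
    simp only [outForests, Finset.mem_filter, Finset.mem_univ, true_and]
    exact ⟨hF, hc.symm⟩

lemma Qmat_zero (W : Matrix (Fin n) (Fin n) ℝ) :
    Qmat W 0 = sigma W 0 • (1 : Matrix (Fin n) (Fin n) ℝ) := by
  have h0 : outForests W 0 = {∅} := by
    ext F
    simp only [outForests, Finset.mem_filter, Finset.mem_univ, true_and, Finset.card_eq_zero,
      Finset.mem_singleton]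
    exact ⟨fun h => h.2, fun h => ⟨h ▸ isOutForest_empty W, h⟩⟩
  ext i j
  rw [Qmat_apply, sigma, wtSet, h0, Finset.sum_singleton, Finset.sum_singleton,
    Matrix.smul_apply, smul_eq_mul, Matrix.one_apply]
  congr 1
  have : inTreeOf (∅ : Finset (Fin n × Fin n)) i j ↔ i = j := by
    constructor
    · intro h
      exact FReach.eq_of_root (by simp) h.2
    · rintro rfl
      exact ⟨by simp, .refl⟩
  simp [ind, this]

lemma Jtil_mul_Lap (W : Matrix (Fin n) (Fin n) ℝ) (hW0 : ∀ i j, 0 ≤ W i j)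
    (hWd : ∀ i, W i i = 0) : Jtil W * Lap W = 0 := by
  have h := Qmat_succ W hW0 hWd (maxArcs W)
  have hQ : Qmat W (maxArcs W + 1) = 0 := by
    ext i j
    rw [Qmat_apply, outForests_maxArcs_succ, Finset.sum_empty, Matrix.zero_apply]
  have hs : sigma W (maxArcs W + 1) = 0 := by
    rw [sigma, wtSet, outForests_maxArcs_succ, Finset.sum_empty]
  rw [hQ, hs, zero_add, zero_smul] at h
  rw [Jtil, Matrix.smul_mul, h, smul_zero]

lemma exists_Jtil_eq (W : Matrix (Fin n) (Fin n) ℝ) (hW0 : ∀ i j, 0 ≤ W i j)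
    (hWd : ∀ i, W i i = 0) : ∃ R : Matrix (Fin n) (Fin n) ℝ, Jtil W = 1 - R * Lap W := by
  have hpos := sigma_maxArcs_pos W
  unfold Jtil
  generalize maxArcs W = m at *
  cases m with
  | zero => exact ⟨0, by rw [Qmat_zero, smul_smul, inv_mul_cancel₀ hpos.ne']; simp⟩
  | succ k =>
    refine ⟨(sigma W (k + 1))⁻¹ • Qmat W k, ?_⟩
    rw [eq_sub_of_add_eq (Qmat_succ W hW0 hWd k), smul_sub, smul_smul,
      inv_mul_cancel₀ hpos.ne', one_smul, Matrix.smul_mul]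

/-! ### Cesàro means -/

/-- Powers of a stochastic matrix have entries in `[0, 1]`, so dividing by `N` kills them. -/
lemma tendsto_inv_smul_pow {P : Matrix (Fin n) (Fin n) ℝ}
    (hP0 : ∀ i j, 0 ≤ P i j) (hP1 : ∀ i, ∑ j, P i j = 1) :
    Filter.Tendsto (fun N : ℕ => (N : ℝ)⁻¹ • P ^ (N + 1)) Filter.atTop (nhds 0) := by
  have hP : P ∈ Matrix.rowStochastic ℝ (Fin n) := by
    rw [Matrix.mem_rowStochastic_iff_sum]
    exact ⟨hP0, hP1⟩
  refine tendsto_pi_nhds.2 fun i => tendsto_pi_nhds.2 fun j => ?_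
  have hb : ∀ N : ℕ, 0 ≤ (P ^ (N + 1)) i j ∧ (P ^ (N + 1)) i j ≤ 1 := fun N => by
    have h := (Matrix.mem_rowStochastic_iff_sum).1 (Submonoid.pow_mem _ hP (N + 1))
    refine ⟨h.1 i j, ?_⟩
    rw [← h.2 i]
    exact Finset.single_le_sum (fun l _ => h.1 i l) (Finset.mem_univ j)
  refine squeeze_zero (g := fun N : ℕ => (N : ℝ)⁻¹) (fun N => ?_) (fun N => ?_)
    tendsto_inv_atTop_nhds_zero_nat
  · exact mul_nonneg (by positivity) (hb N).1
  · exact mul_le_of_le_one_right (by positivity) (hb N).2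

/-- Markov chain tree theorem form. Let `P` be a row-stochastic matrix
inversely corresponding to `Γ`, i.e., `I − P = α Lᵀ` for some nonzero real `α`. Then the
Cesàro limit `C = lim_{N→∞} (1/N) Σ_{t=1}^{N} P^t` exists and satisfies `Cᵀ = J̃`. -/
theorem cesaro_limit_eq_Jtil (n : ℕ) (hn : 1 < n)
    (W : Matrix (Fin n) (Fin n) ℝ)
    (hW0 : ∀ i j, 0 ≤ W i j) (hWd : ∀ i, W i i = 0)
    (P : Matrix (Fin n) (Fin n) ℝ)
    (hP0 : ∀ i j, 0 ≤ P i j) (hP1 : ∀ i, ∑ j, P i j = 1)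
    (α : ℝ) (hα : α ≠ 0)
    (hcorr : 1 - P = α • (Lap W)ᵀ) :
    Filter.Tendsto (fun N : ℕ => (N : ℝ)⁻¹ • ∑ t ∈ Finset.range N, P ^ (t + 1))
      Filter.atTop (nhds (Jtil W)ᵀ) := by
  obtain ⟨R, hR⟩ := exists_Jtil_eq W hW0 hWd
  have hL : (Lap W)ᵀ = α⁻¹ • (1 - P) := by
    rw [hcorr, smul_smul, inv_mul_cancel₀ hα, one_smul]
  have hPJ : P * (Jtil W)ᵀ = (Jtil W)ᵀ := by
    have h := congrArg Matrix.transpose (Jtil_mul_Lap W hW0 hWd)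
    rw [Matrix.transpose_mul, Matrix.transpose_zero] at h
    have h2 : (1 - P) * (Jtil W)ᵀ = 0 := by rw [hcorr, Matrix.smul_mul, h, smul_zero]
    rw [sub_mul, one_mul, sub_eq_zero] at h2
    exact h2.symm
  have hpow : ∀ t : ℕ, P ^ t * (Jtil W)ᵀ = (Jtil W)ᵀ := by
    intro t
    induction t with
    | zero => simp
    | succ t ih => rw [pow_succ, mul_assoc, hPJ, ih]
  have hone : (1 : Matrix (Fin n) (Fin n) ℝ) = (Jtil W)ᵀ + (1 - P) * (α⁻¹ • Rᵀ) := by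
    rw [hR, Matrix.transpose_sub, Matrix.transpose_one, Matrix.transpose_mul, hL,
      Matrix.smul_mul, Matrix.mul_smul, sub_add_cancel]
  have hterm : ∀ t : ℕ, P ^ (t + 1) =
      (Jtil W)ᵀ + (P ^ (t + 1) - P ^ (t + 2)) * (α⁻¹ • Rᵀ) := by
    intro t
    calc P ^ (t + 1) = P ^ (t + 1) * ((Jtil W)ᵀ + (1 - P) * (α⁻¹ • Rᵀ)) := by
          rw [← hone, mul_one]
      _ = _ := by rw [mul_add, hpow, ← mul_assoc, mul_sub, mul_one, ← pow_succ]
  have hsum : ∀ N : ℕ, ∑ t ∈ Finset.range N, P ^ (t + 1) =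
      (N : ℝ) • (Jtil W)ᵀ + (P - P ^ (N + 1)) * (α⁻¹ • Rᵀ) := by
    intro N
    rw [Finset.sum_congr rfl fun t _ => hterm t, Finset.sum_add_distrib, ← Finset.sum_mul,
      Finset.sum_range_sub' (fun t => P ^ (t + 1))]
    simp [Nat.cast_smul_eq_nsmul]
  have hlim : Filter.Tendsto (fun N : ℕ => (Jtil W)ᵀ +
      ((N : ℝ)⁻¹ • P - (N : ℝ)⁻¹ • P ^ (N + 1)) * (α⁻¹ • Rᵀ))
      Filter.atTop (nhds ((Jtil W)ᵀ + (((0 : ℝ) • P) - 0) * (α⁻¹ • Rᵀ))) :=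
    tendsto_const_nhds.add
      (((tendsto_inv_atTop_nhds_zero_nat.smul_const P).sub
        (tendsto_inv_smul_pow hP0 hP1)).mul tendsto_const_nhds)
  rw [zero_smul, sub_zero, zero_mul, add_zero] at hlim
  refine hlim.congr' ?_
  filter_upwards [Filter.eventually_gt_atTop 0] with N hN
  have hN' : (N : ℝ) ≠ 0 := by exact_mod_cast hN.ne'
  rw [hsum, smul_add, smul_smul, inv_mul_cancel₀ hN', one_smul, ← Matrix.smul_mul, smul_sub]

end ForestMatrix
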